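/- Fix s ∈ ℝ and let θ : ℕ → (0, ∞) satisfy (θ(N) − N)/√N → s as N → ∞. Then for every pair x, y ∈ ℕ, the Charlier kernel converges pointwise to the discrete Hermite kernel: lim_{N→∞} Σ_{m=0}^{N−1} C̃_m(x;θ(N))·C̃_m(y;θ(N)) = K_s(x,y). -/

import Mathlib

open Filter
open scoped Nat Topology

noncomputable section

/-- The Charlier polynomial of degree `m` with parameter `θ`, evaluated at `x ∈ ℕ`:
`C_m(x;θ) = Σ_{k=0}^m (−1)^k·(m choose k)·(x choose k)·k!·θ^{−k}`. -/
def charlier (θ : ℝ) (m x : ℕ) : ℝ :=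
  ∑ k ∈ Finset.range (m + 1),
    (-1 : ℝ) ^ k * (m.choose k : ℝ) * (x.choose k : ℝ) * (k ! : ℝ) / θ ^ k

/-- The normalized Charlier function
`C̃_m(x;θ) = e^{−θ/2}·θ^{(x+m)/2}·(x!·m!)^{−1/2}·C_m(x;θ)`. -/
def normalizedCharlier (θ : ℝ) (m x : ℕ) : ℝ :=
  Real.exp (-θ / 2) * Real.sqrt (θ ^ (x + m)) / Real.sqrt ((x ! : ℝ) * (m ! : ℝ)) *
    charlier θ m x

/-- The Charlier kernel `K^{ch}_{N,θ}(x,y) = Σ_{m=0}^{N−1} C̃_m(x;θ)·C̃_m(y;θ)`. -/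
def charlierKernel (N : ℕ) (θ : ℝ) (x y : ℕ) : ℝ :=
  ∑ m ∈ Finset.range N, normalizedCharlier θ m x * normalizedCharlier θ m y

/-- The discrete Hermite kernel with parameter `s ∈ ℝ`:
`K_s(x,y) = (2π·x!·y!)^{−1/2} ∫_s^∞ e^{−t²/2}·He_x(t)·He_y(t) dt` for `x, y ∈ ℕ`,
where `He_n` is the probabilists' Hermite polynomial. -/
def discreteHermiteKernel (s : ℝ) (x y : ℕ) : ℝ :=
  (Real.sqrt (2 * Real.pi * (x ! : ℝ) * (y ! : ℝ)))⁻¹ *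
    ∫ t in Set.Ioi s, Real.exp (-t ^ 2 / 2) * Polynomial.aeval t (Polynomial.hermite x) *
      Polynomial.aeval t (Polynomial.hermite y)

/-!
As a function of `m`, `h_m(x) = t^{x/2} C_m(x; t) = t^{x/2} C_x(m; t)` is, up to normalization, the
orthogonal polynomial of degree `x` for the Poisson weight `w(m) = e^{-t} tᵐ / m!`, so the Charlier
kernel is a truncated Poisson expectation of two such polynomials. For the truncated sums
`S_N(x, y) = Σ_{m<N} w(m) h_m(x) h_m(y)`, summation by parts lowers `x` and `y` simultaneously:
`S_{N+1}(x, y+1) = √t w(N) h_{N+1}(x) h_N(y) + x S_{N+1}(x-1, y)`.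
Gaussian integration by parts gives the integrals `∫ₛ^∞ e^{-u²/2} He_x He_y` the same recursion,
with boundary term `e^{-s²/2} He_x(s) He_y(s)`. Hence it suffices to pass to the limit in the
boundary terms, by Stirling's formula and the three-term recurrences of `C` and `He`, and in the
case `x = y = 0`, which is the central limit theorem for the Poisson distribution.
-/

section Charlier

lemma charlier_eq_sum_range_of_lt {m K : ℕ} (hmK : m < K) (θ : ℝ) (x : ℕ) :
    charlier θ m x = ∑ k ∈ Finset.range K,
      (-1 : ℝ) ^ k * (m.choose k : ℝ) * (x.choose k : ℝ) * (k ! : ℝ) / θ ^ k := by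
  refine Finset.sum_subset (Finset.range_subset_range.2 hmK) fun k _ hk ↦ ?_
  have hmk : m < k := by simpa using hk
  simp [Nat.choose_eq_zero_of_lt hmk]

lemma charlier_comm (θ : ℝ) (m x : ℕ) : charlier θ m x = charlier θ x m := by
  rw [charlier_eq_sum_range_of_lt (show m < m + x + 1 by lia),
    charlier_eq_sum_range_of_lt (show x < m + x + 1 by lia)]
  exact Finset.sum_congr rfl fun k _ ↦ by ring

lemma charlier_zero_right (θ : ℝ) (m : ℕ) : charlier θ m 0 = 1 := by
  rw [charlier_comm]
  simp [charlier]

lemma charlier_succ_left (θ : ℝ) (m x : ℕ) :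
    charlier θ (m + 1) x = charlier θ m x - x / θ * charlier θ m (x - 1) := by
  rcases x with _ | x
  · simp [charlier_zero_right]
  rw [charlier_eq_sum_range_of_lt (show m < m + 1 + 1 by lia) θ (x + 1), charlier, charlier,
    Finset.sum_range_succ', Finset.sum_range_succ' _ (m + 1), Finset.mul_sum, add_sub_right_comm,
    ← Finset.sum_sub_distrib]
  simp only [Nat.choose_zero_right, add_tsub_cancel_right]
  congr 1
  refine Finset.sum_congr rfl fun k _ ↦ ?_
  have hpascal : ((m + 1).choose (k + 1) : ℝ) = m.choose k + m.choose (k + 1) := by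
    exact_mod_cast Nat.choose_succ_succ m k
  have habsorb : ((x + 1 : ℕ) : ℝ) * x.choose k = (x + 1).choose (k + 1) * (k + 1) := by
    exact_mod_cast Nat.add_one_mul_choose_eq x k
  rw [hpascal, Nat.factorial_succ, pow_succ θ]
  push_cast at habsorb ⊢
  linear_combination ((-1) ^ k * (m.choose k : ℝ) * k ! / (θ ^ k * θ)) * habsorb

lemma charlier_succ_right (θ : ℝ) (m x : ℕ) :
    charlier θ m (x + 1) = charlier θ m x - m / θ * charlier θ (m - 1) x := by
  rw [charlier_comm, charlier_succ_left, charlier_comm θ x m, charlier_comm θ x (m - 1)]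

lemma charlier_three_term {θ : ℝ} (hθ : θ ≠ 0) (m x : ℕ) :
    θ * charlier θ m (x + 1) = (x + θ - m) * charlier θ m x - x * charlier θ m (x - 1) := by
  rcases m with _ | m
  · simp [charlier_comm θ 0, charlier_zero_right]
  have hright := charlier_succ_right θ (m + 1) x
  rcases x with _ | x
  · simp only [charlier_zero_right] at hright ⊢
    rw [hright]
    field_simp
    simp
  have hleft := charlier_succ_left θ m (x + 1)
  have hright_pred := charlier_succ_right θ (m + 1) x
  simp only [add_tsub_cancel_right] at hright hleft hright_pred ⊢
  field_simp at hright hleft hright_pred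
  apply mul_left_cancel₀ hθ
  linear_combination θ * hright + (m + 1 : ℕ) * hleft - (x + 1 : ℕ) * hright_pred

end Charlier

/-- The Poisson weight `e^{-t} tᵐ / m!`, for an arbitrary real rate `t`; Mathlib's
`ProbabilityTheory.poissonMeasure` requires the rate to be in `ℝ≥0`. -/
def poissonWeight (t : ℝ) (m : ℕ) : ℝ := Real.exp (-t) * t ^ m / m !

/-- The rescaled Charlier function `t^{x/2} C_m(x;t)`. As a function of `(t - m)/√t` it is a monic
polynomial of degree `x`, whose coefficients converge to those of `He_x` as `t → ∞`. -/
def scaledCharlier (t : ℝ) (m x : ℕ) : ℝ := √t ^ x * charlier t m x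

/-- The Charlier kernel without its prefactor `(x! y!)^{-1/2}`, as a truncated Poisson
expectation. -/
def charlierSum (N : ℕ) (t : ℝ) (x y : ℕ) : ℝ :=
  ∑ m ∈ Finset.range N, poissonWeight t m * (scaledCharlier t m x * scaledCharlier t m y)

section ScaledCharlier

variable {t : ℝ}

lemma add_one_mul_poissonWeight_succ (t : ℝ) (m : ℕ) :
    (m + 1) * poissonWeight t (m + 1) = t * poissonWeight t m := by
  simp only [poissonWeight, Nat.factorial_succ, Nat.cast_mul, Nat.cast_add, Nat.cast_one, pow_succ']
  field_simp

lemma scaledCharlier_zero_right (t : ℝ) (m : ℕ) : scaledCharlier t m 0 = 1 := by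
  simp [scaledCharlier, charlier_zero_right]

lemma scaledCharlier_succ_left (ht : 0 < t) (m x : ℕ) :
    scaledCharlier t (m + 1) x = scaledCharlier t m x - x / √t * scaledCharlier t m (x - 1) := by
  rcases x with _ | x
  · simp [scaledCharlier_zero_right]
  have hsq : √t ^ 2 = t := Real.sq_sqrt ht.le
  simp only [scaledCharlier, charlier_succ_left, add_tsub_cancel_right, pow_succ]
  field_simp
  rw [hsq]
  field_simp

lemma scaledCharlier_succ_right (ht : 0 < t) (m x : ℕ) :
    √t * scaledCharlier t m (x + 1) =
      t * scaledCharlier t m x - m * scaledCharlier t (m - 1) x := by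
  have hsq : √t ^ 2 = t := Real.sq_sqrt ht.le
  simp only [scaledCharlier, charlier_succ_right, pow_succ]
  field_simp
  rw [hsq]

lemma scaledCharlier_three_term (ht : 0 < t) (m x : ℕ) :
    scaledCharlier t m (x + 1) =
      (x / √t + (t - m) / √t) * scaledCharlier t m x - x * scaledCharlier t m (x - 1) := by
  have hsq : √t ^ 2 = t := Real.sq_sqrt ht.le
  have hrec := charlier_three_term ht.ne' m x
  rcases x with _ | x
  · simp only [scaledCharlier, Nat.cast_zero, pow_zero, zero_add, pow_one, zero_mul, sub_zero,
      zero_div, one_mul] at hrec ⊢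
    field_simp
    rw [hsq, hrec]
  simp only [scaledCharlier, add_tsub_cancel_right, pow_succ] at hrec ⊢
  field_simp
  rw [hsq]
  linear_combination hrec

lemma poissonWeight_mul_scaledCharlier_succ_right (ht : 0 < t) (m y : ℕ) :
    poissonWeight t (m + 1) * scaledCharlier t (m + 1) (y + 1) =
      √t * (poissonWeight t (m + 1) * scaledCharlier t (m + 1) y -
        poissonWeight t m * scaledCharlier t m y) := by
  have hsq : √t ^ 2 = t := Real.sq_sqrt ht.le
  have hrec := scaledCharlier_succ_right ht (m + 1) y
  have hw := add_one_mul_poissonWeight_succ t m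
  push_cast [add_tsub_cancel_right] at hrec
  apply mul_left_cancel₀ (Real.sqrt_pos.2 ht).ne'
  linear_combination poissonWeight t (m + 1) * hrec - scaledCharlier t m y * hw -
    (poissonWeight t (m + 1) * scaledCharlier t (m + 1) y -
      poissonWeight t m * scaledCharlier t m y) * hsq

lemma charlierSum_comm (N : ℕ) (t : ℝ) (x y : ℕ) : charlierSum N t x y = charlierSum N t y x := by
  simp only [charlierSum, mul_comm (scaledCharlier t _ x)]

lemma charlierSum_succ_right (ht : 0 < t) (N x y : ℕ) :
    charlierSum (N + 1) t x (y + 1) =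
      √t * poissonWeight t N * (scaledCharlier t (N + 1) x * scaledCharlier t N y) +
        x * charlierSum (N + 1) t (x - 1) y := by
  have hcancel : √t * (x / √t) = x := mul_div_cancel₀ _ (Real.sqrt_pos.2 ht).ne'
  induction N with
  | zero =>
    have hy : scaledCharlier t 0 (y + 1) = √t * scaledCharlier t 0 y := by
      simp only [scaledCharlier, charlier_comm t 0, charlier_zero_right]
      ring
    simp only [charlierSum, zero_add, Finset.sum_range_one, hy, scaledCharlier_succ_left ht 0 x]
    linear_combination
      poissonWeight t 0 * scaledCharlier t 0 (x - 1) * scaledCharlier t 0 y * hcancel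
  | succ N ih =>
    have hparts := poissonWeight_mul_scaledCharlier_succ_right ht N y
    rw [charlierSum, Finset.sum_range_succ, ← charlierSum, ih, charlierSum, charlierSum,
      Finset.sum_range_succ _ (N + 1), scaledCharlier_succ_left ht (N + 1) x]
    linear_combination scaledCharlier t (N + 1) x * hparts + poissonWeight t (N + 1) *
      scaledCharlier t (N + 1) (x - 1) * scaledCharlier t (N + 1) y * hcancel

lemma charlierKernel_eq_charlierSum (ht : 0 ≤ t) (N x y : ℕ) :
    charlierKernel N t x y = (√(x ! * y !))⁻¹ * charlierSum N t x y := by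
  rw [charlierKernel, charlierSum, Finset.mul_sum]
  refine Finset.sum_congr rfl fun m _ ↦ ?_
  have hexp : Real.exp (-t) = Real.exp (-t / 2) ^ 2 := by rw [← Real.exp_nat_mul]; ring_nf
  have hpow : t ^ m = (√t ^ m) ^ 2 := by rw [← pow_mul, pow_mul', Real.sq_sqrt ht]
  have hfact : √(m ! : ℝ) ^ 2 = m ! := Real.sq_sqrt (by positivity)
  have hsqrt_pow (k : ℕ) : √(t ^ k) = √t ^ k := by
    rw [Real.sqrt_eq_iff_mul_self_eq (by positivity) (by positivity), ← mul_pow,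
      Real.mul_self_sqrt ht]
  simp only [normalizedCharlier, poissonWeight, scaledCharlier, hsqrt_pow,
    Real.sqrt_mul (Nat.cast_nonneg _)]
  rw [hexp, hpow]
  field_simp
  rw [hfact]
  ring

end ScaledCharlier

section Hermite

open MeasureTheory Polynomial

lemma derivative_hermite (n : ℕ) : derivative (hermite n) = n * hermite (n - 1) := by
  induction n with
  | zero => simp
  | succ n ih =>
    rcases n with _ | n
    · simp [hermite_succ]
    have hsucc := hermite_succ n
    rw [hermite_succ, derivative_sub, derivative_mul, derivative_X, ih, derivative_mul,
      derivative_natCast]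
    push_cast [add_tsub_cancel_right]
    linear_combination -(n + 1 : ℤ[X]) * hsucc

lemma aeval_hermite_succ (n : ℕ) (u : ℝ) :
    aeval u (hermite (n + 1)) = u * aeval u (hermite n) - n * aeval u (hermite (n - 1)) := by
  simp [hermite_succ, derivative_hermite]

lemma integrable_exp_neg_sq_div_two_mul_aeval {R : Type*} [CommSemiring R] [Algebra R ℝ]
    (p : R[X]) :
    Integrable fun u : ℝ ↦ Real.exp (-u ^ 2 / 2) * aeval u p := by
  induction p using Polynomial.induction_on' with
  | add p q hp hq => simpa only [map_add, mul_add] using! hp.add hq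
  | monomial k a =>
    have hk : (-1 : ℝ) < k := neg_one_lt_zero.trans_le k.cast_nonneg
    have hint := (integrable_rpow_mul_exp_neg_mul_sq (one_half_pos (α := ℝ)) hk).const_mul
      (algebraMap R ℝ a)
    refine hint.congr (.of_forall fun u ↦ ?_)
    simp only [aeval_monomial, Real.rpow_natCast]
    ring_nf

variable {R : Type*} [CommRing R] [Algebra R ℝ]

lemma hasDerivAt_neg_exp_neg_sq_div_two_mul_aeval (p : R[X]) (u : ℝ) :
    HasDerivAt (fun v ↦ -(Real.exp (-v ^ 2 / 2) * aeval v p))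
      (Real.exp (-u ^ 2 / 2) * aeval u (X * p - derivative p)) u := by
  have hquad : HasDerivAt (fun v : ℝ ↦ -v ^ 2 / 2) (-u) u := by
    simpa [neg_div] using! ((hasDerivAt_pow 2 u).neg.div_const 2)
  convert! (hquad.exp.mul (p.hasDerivAt_aeval u)).neg using 1
  simp only [map_sub, map_mul, aeval_X]
  ring

lemma integral_Ioi_exp_neg_sq_div_two_mul_aeval_X_mul_sub_derivative (p : R[X]) (s : ℝ) :
    ∫ u in Set.Ioi s, Real.exp (-u ^ 2 / 2) * aeval u (X * p - derivative p) =
      Real.exp (-s ^ 2 / 2) * aeval s p := by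
  have hderiv := hasDerivAt_neg_exp_neg_sq_div_two_mul_aeval p
  have hint := (integrable_exp_neg_sq_div_two_mul_aeval (X * p - derivative p)).integrableOn
    (s := Set.Ioi s)
  have hzero := tendsto_zero_of_hasDerivAt_of_integrableOn_Ioi (fun u _ ↦ hderiv u) hint
    (integrable_exp_neg_sq_div_two_mul_aeval p).neg.integrableOn
  rw [integral_Ioi_of_hasDerivAt_of_tendsto' (fun u _ ↦ hderiv u) hint hzero, zero_sub, neg_neg]

/-- The integral `∫ₛ^∞ e^{-u²/2} He_x(u) He_y(u) du`, i.e. the discrete Hermite kernel without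
its prefactor. -/
def hermiteGaussianIntegral (s : ℝ) (x y : ℕ) : ℝ :=
  ∫ u in Set.Ioi s, Real.exp (-u ^ 2 / 2) * aeval u (hermite x) * aeval u (hermite y)

lemma hermiteGaussianIntegral_comm (s : ℝ) (x y : ℕ) :
    hermiteGaussianIntegral s x y = hermiteGaussianIntegral s y x := by
  simp only [hermiteGaussianIntegral, mul_right_comm]

lemma hermiteGaussianIntegral_succ_right (s : ℝ) (x y : ℕ) :
    hermiteGaussianIntegral s x (y + 1) =
      Real.exp (-s ^ 2 / 2) * (aeval s (hermite x) * aeval s (hermite y)) +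
        x * hermiteGaussianIntegral s (x - 1) y := by
  have hint (a b : ℕ) : IntegrableOn
      (fun u : ℝ ↦ Real.exp (-u ^ 2 / 2) * aeval u (hermite a) * aeval u (hermite b))
      (Set.Ioi s) := by
    simpa only [map_mul, mul_assoc] using!
      (integrable_exp_neg_sq_div_two_mul_aeval (hermite a * hermite b)).integrableOn
  rw [← sub_eq_iff_eq_add, hermiteGaussianIntegral, hermiteGaussianIntegral,
    ← integral_const_mul, ← integral_sub (hint x (y + 1)) ((hint (x - 1) y).const_mul _),
    ← map_mul, ← integral_Ioi_exp_neg_sq_div_two_mul_aeval_X_mul_sub_derivative]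
  congr 1 with u
  simp only [hermite_succ, derivative_mul, derivative_hermite x, map_sub, map_add, map_mul,
    map_natCast, aeval_X]
  ring

lemma discreteHermiteKernel_eq_hermiteGaussianIntegral (s : ℝ) (x y : ℕ) :
    discreteHermiteKernel s x y =
      (√(x ! * y !))⁻¹ * ((√(2 * Real.pi))⁻¹ * hermiteGaussianIntegral s x y) := by
  rw [discreteHermiteKernel, hermiteGaussianIntegral, mul_assoc (2 * Real.pi),
    Real.sqrt_mul (by positivity), mul_inv]
  ring

end Hermite

section Limits

variable {ι : Type*} {l : Filter ι}

lemma tendsto_div_one_of_tendsto_sub_div_sqrt {a b : ι → ℝ} {c : ℝ} (hb : Tendsto b l atTop)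
    (hab : Tendsto (fun i ↦ (a i - b i) / √(b i)) l (𝓝 c)) :
    Tendsto (fun i ↦ a i / b i) l (𝓝 1) := by
  have hlim := (hab.mul (Real.tendsto_sqrt_atTop.comp hb).inv_tendsto_atTop).const_add 1
  rw [mul_zero, add_zero] at hlim
  refine hlim.congr' ?_
  filter_upwards [hb.eventually_gt_atTop 0] with i hi
  have hsq : √(b i) ^ 2 = b i := Real.sq_sqrt hi.le
  simp only [Pi.inv_apply, Function.comp_apply]
  field_simp
  rw [hsq]
  field_simp
  ring

lemma tendsto_atTop_of_tendsto_sub_div_sqrt {a b : ι → ℝ} {c : ℝ} (hb : Tendsto b l atTop)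
    (hab : Tendsto (fun i ↦ (a i - b i) / √(b i)) l (𝓝 c)) : Tendsto a l atTop := by
  have hratio := tendsto_div_one_of_tendsto_sub_div_sqrt hb hab
  refine (hratio.pos_mul_atTop one_pos hb).congr' ?_
  filter_upwards [hb.eventually_ne_atTop 0] with i hi
  exact div_mul_cancel₀ _ hi

lemma tendsto_sub_div_sqrt_left {a b : ι → ℝ} {c : ℝ} (hb : Tendsto b l atTop)
    (hab : Tendsto (fun i ↦ (a i - b i) / √(b i)) l (𝓝 c)) :
    Tendsto (fun i ↦ (a i - b i) / √(a i)) l (𝓝 c) := by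
  have hratio := (tendsto_div_one_of_tendsto_sub_div_sqrt hb hab).sqrt.inv₀ (by simp)
  have hlim := hab.mul hratio
  rw [Real.sqrt_one, inv_one, mul_one] at hlim
  refine hlim.congr' ?_
  filter_upwards [hb.eventually_gt_atTop 0] with i hi
  rw [Real.sqrt_div' _ hi.le, inv_div, div_mul_div_cancel₀ (Real.sqrt_pos.2 hi).ne']

lemma tendsto_sub_add_const_div_sqrt {a b : ι → ℝ} {c : ℝ} (ha : Tendsto a l atTop)
    (hab : Tendsto (fun i ↦ (a i - b i) / √(a i)) l (𝓝 c)) (d : ℝ) :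
    Tendsto (fun i ↦ (a i - (b i + d)) / √(a i)) l (𝓝 c) := by
  have hlim := hab.sub ((Real.tendsto_sqrt_atTop.comp ha).const_div_atTop d)
  rw [sub_zero] at hlim
  refine hlim.congr fun i ↦ ?_
  rw [Function.comp_apply]
  ring

lemma tendsto_mul_comp_of_isLittleO_sub_mul_sq {𝕜 : Type*} [NormedField 𝕜] {g : 𝕜 → 𝕜} {a L : 𝕜}
    (hg : (fun w ↦ g w - a * w ^ 2) =o[𝓝 0] fun w ↦ w ^ 2) {c z : ι → 𝕜}
    (hz : Tendsto z l (𝓝 0)) (hcz : Tendsto (fun i ↦ c i * z i ^ 2) l (𝓝 L)) :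
    Tendsto (fun i ↦ c i * g (z i)) l (𝓝 (a * L)) := by
  have hremainder : Tendsto (fun i ↦ c i * (g (z i) - a * z i ^ 2)) l (𝓝 0) :=
    (Asymptotics.isLittleO_one_iff 𝕜).1
      (((Asymptotics.isBigO_refl c l).mul_isLittleO (hg.comp_tendsto hz)).trans_isBigO
        (hcz.isBigO_one 𝕜))
  have hsum := hremainder.add (hcz.const_mul a)
  rw [zero_add] at hsum
  exact hsum.congr fun i ↦ by ring

lemma log_one_add_taylor_two_isLittleO :
    (fun v : ℝ ↦ Real.log (1 + v) - v - -1 / 2 * v ^ 2) =o[𝓝 0] fun v ↦ v ^ 2 := by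
  have hcubic : (fun v : ℝ ↦ Real.log (1 + v) - v - -1 / 2 * v ^ 2) =O[𝓝 0] fun v ↦ v ^ 3 := by
    refine .of_bound 2 ?_
    filter_upwards [Metric.ball_mem_nhds (0 : ℝ) one_half_pos] with v hv
    have hv : |v| < 1 / 2 := by simpa using hv
    have hbound := Real.abs_log_sub_add_sum_range_le (x := -v) (by rw [abs_neg]; linarith) 2
    calc ‖Real.log (1 + v) - v - -1 / 2 * v ^ 2‖
        ≤ |v| ^ 3 / (1 - |v|) := by
          convert hbound using 2
          · simp only [Finset.sum_range_succ, Finset.sum_range_zero, Nat.cast_zero, Nat.cast_one,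
              sub_neg_eq_add, Real.norm_eq_abs]
            congr 1
            ring
          all_goals rw [abs_neg]
      _ ≤ 2 * ‖v ^ 3‖ := by
          rw [norm_pow, Real.norm_eq_abs, div_le_iff₀ (by linarith)]
          nlinarith [pow_nonneg (abs_nonneg v) 3]
  exact hcubic.trans_isLittleO (Asymptotics.isLittleO_pow_pow (by norm_num))

variable {t : ι → ℝ} {n : ι → ℕ} {s : ℝ}

lemma tendsto_scaledCharlier (ht : Tendsto t l atTop)
    (hn : Tendsto (fun i ↦ (t i - n i) / √(t i)) l (𝓝 s)) (x : ℕ) :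
    Tendsto (fun i ↦ scaledCharlier (t i) (n i) x) l
      (𝓝 (Polynomial.aeval s (Polynomial.hermite x))) := by
  have hsmall (k : ℕ) : Tendsto (fun i ↦ (k : ℝ) / √(t i)) l (𝓝 0) :=
    (Real.tendsto_sqrt_atTop.comp ht).const_div_atTop _
  induction x using Nat.strong_induction_on with
  | _ x ih =>
    rcases x with _ | x
    · simpa [scaledCharlier_zero_right] using tendsto_const_nhds
    have hpred : Tendsto (fun i ↦ x * scaledCharlier (t i) (n i) (x - 1)) l
        (𝓝 (x * Polynomial.aeval s (Polynomial.hermite (x - 1)))) :=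
      (ih (x - 1) (by lia)).const_mul _
    have hlim := (((hsmall x).add hn).mul (ih x (by lia))).sub hpred
    rw [zero_add, ← aeval_hermite_succ] at hlim
    refine hlim.congr' ?_
    filter_upwards [ht.eventually_gt_atTop 0] with i hi
    exact (scaledCharlier_three_term hi (n i) x).symm

lemma sqrt_mul_poissonWeight {t : ℝ} (ht : 0 < t) {n : ℕ} (hn : n ≠ 0) :
    √t * poissonWeight t n = √(t / n) * (√2 * Stirling.stirlingSeq n)⁻¹ *
      Real.exp (n * (Real.log (1 + (t / n - 1)) - (t / n - 1))) := by
  have hn' : (0 : ℝ) < n := by exact_mod_cast hn.bot_lt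
  have hexp : Real.exp (n * (Real.log (1 + (t / n - 1)) - (t / n - 1))) =
      (t / n) ^ n * (Real.exp n / Real.exp t) := by
    rw [add_sub_cancel, mul_sub, Real.exp_sub, Real.exp_nat_mul, Real.exp_log (by positivity),
      mul_sub, mul_div_cancel₀ _ hn'.ne', mul_one, Real.exp_sub]
    field_simp
  rw [hexp, poissonWeight, Stirling.stirlingSeq, Real.exp_neg, Real.sqrt_div' _ hn'.le,
    Real.sqrt_mul zero_le_two, div_pow, div_pow, Real.exp_one_pow]
  field_simp

lemma tendsto_sqrt_mul_poissonWeight (ht : Tendsto t l atTop)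
    (hn : Tendsto (fun i ↦ (t i - n i) / √(t i)) l (𝓝 s)) :
    Tendsto (fun i ↦ √(t i) * poissonWeight (t i) (n i)) l
      (𝓝 ((√(2 * Real.pi))⁻¹ * Real.exp (-s ^ 2 / 2))) := by
  have hn_neg : Tendsto (fun i ↦ (n i - t i) / √(t i)) l (𝓝 (-s)) :=
    hn.neg.congr fun i ↦ by ring
  have hn_atTop : Tendsto n l atTop :=
    tendsto_natCast_atTop_iff.1 (tendsto_atTop_of_tendsto_sub_div_sqrt ht hn_neg)
  have hratio : Tendsto (fun i ↦ t i / n i) l (𝓝 1) := by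
    simpa only [inv_div, inv_one] using
      (tendsto_div_one_of_tendsto_sub_div_sqrt ht hn_neg).inv₀ one_ne_zero
  have hsq : Tendsto (fun i ↦ (n i : ℝ) * (t i / n i - 1) ^ 2) l (𝓝 (s ^ 2)) := by
    have hlim := (hn.pow 2).mul hratio
    rw [mul_one] at hlim
    refine hlim.congr' ?_
    filter_upwards [ht.eventually_gt_atTop 0, hn_atTop.eventually_ne_atTop 0] with i hti hni
    rw [div_pow, Real.sq_sqrt hti.le]
    field_simp
  have hexponent := tendsto_mul_comp_of_isLittleO_sub_mul_sq log_one_add_taylor_two_isLittleO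
    (tendsto_sub_nhds_zero_iff.2 hratio) hsq
  have hstirling := ((Stirling.tendsto_stirlingSeq_sqrt_pi.comp hn_atTop).const_mul √2).inv₀
    (by positivity)
  have hlim := (hratio.sqrt.mul hstirling).mul hexponent.rexp
  convert! hlim.congr' ?_ using 2
  · rw [Real.sqrt_one, one_mul, Real.sqrt_mul zero_le_two]
    ring_nf
  · filter_upwards [ht.eventually_gt_atTop 0, hn_atTop.eventually_ne_atTop 0] with i hti hni
    exact (sqrt_mul_poissonWeight hti hni).symm

end Limits

section PoissonCLT

open MeasureTheory ProbabilityTheory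

/-- The law of `(k - b) / √t` for a Poisson variable `k` of rate `t` (of rate `0` when `t < 0`).
The centering `b` is free, so that `k ≤ n` becomes the event that a variable is nonpositive. -/
def standardizedPoisson (t b : ℝ) : ProbabilityMeasure ℝ :=
  ⟨(poissonMeasure t.toNNReal).map fun k : ℕ ↦ ((k : ℝ) - b) / √t,
    Measure.isProbabilityMeasure_map (by fun_prop)⟩

lemma charFun_standardizedPoisson {t : ℝ} (ht : 0 < t) (b u : ℝ) :
    charFun (standardizedPoisson t b : Measure ℝ) u =
      Complex.exp (t * (Complex.exp ((u / √t : ℝ) * Complex.I) - 1 - (u / √t : ℝ) * Complex.I) +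
        ((t - b) / √t * u : ℝ) * Complex.I) := by
  have hmap : (standardizedPoisson t b : Measure ℝ) =
      (((poissonMeasure t.toNNReal).map (fun k : ℕ ↦ (k : ℝ))).map
        fun k ↦ (√t)⁻¹ * k).map fun k ↦ k + -(b / √t) := by
    rw [Measure.map_map (by fun_prop) (by fun_prop), Measure.map_map (by fun_prop) (by fun_prop)]
    simp only [standardizedPoisson, ProbabilityMeasure.coe_mk]
    congr 1 with k
    simp only [Function.comp_apply]
    ring
  have hsq : ((√t : ℝ) : ℂ) ^ 2 = t := by exact_mod_cast Real.sq_sqrt ht.le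
  have hne : ((√t : ℝ) : ℂ) ≠ 0 := by exact_mod_cast (Real.sqrt_pos.2 ht).ne'
  rw [hmap, charFun_map_add_const, charFun_map_mul, charFun_map_cast_poissonMeasure,
    Real.coe_toNNReal t ht.le, ← Complex.exp_add, inv_mul_eq_div]
  congr 1
  simp only [RCLike.inner_apply, conj_trivial]
  push_cast
  field_simp
  rw [← hsq]
  ring

lemma exp_taylor_two_isLittleO :
    (fun z : ℂ ↦ Complex.exp z - 1 - z - 1 / 2 * z ^ 2) =o[𝓝 0] fun z ↦ z ^ 2 := by
  refine (Complex.exp_sub_sum_range_succ_isLittleO_pow 2).congr_left fun z ↦ ?_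
  simp only [Finset.sum_range_succ, Finset.sum_range_zero, Nat.factorial, Nat.cast_one,
    Nat.cast_mul]
  ring

variable {t b : ℕ → ℝ} {s : ℝ}

lemma tendsto_standardizedPoisson (ht : Tendsto t atTop atTop)
    (hb : Tendsto (fun i ↦ (t i - b i) / √(t i)) atTop (𝓝 s)) :
    Tendsto (fun i ↦ standardizedPoisson (t i) (b i)) atTop
      (𝓝 ⟨gaussianReal s 1, inferInstance⟩) := by
  refine ProbabilityMeasure.tendsto_of_tendsto_charFun fun u ↦ ?_
  have hsmall : Tendsto (fun i ↦ ((u / √(t i) : ℝ) : ℂ) * Complex.I) atTop (𝓝 0) := by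
    have hlim : Tendsto (fun i ↦ u / √(t i)) atTop (𝓝 0) :=
      (Real.tendsto_sqrt_atTop.comp ht).const_div_atTop u
    simpa using hlim.ofReal.mul_const Complex.I
  have hsq : Tendsto (fun i ↦ (t i : ℂ) * (((u / √(t i) : ℝ) : ℂ) * Complex.I) ^ 2) atTop
      (𝓝 (-u ^ 2)) := by
    refine tendsto_const_nhds.congr' ?_
    filter_upwards [ht.eventually_gt_atTop 0] with i hi
    have hsqrt : ((√(t i) : ℝ) : ℂ) ^ 2 = t i := by exact_mod_cast Real.sq_sqrt hi.le
    have hne : ((√(t i) : ℝ) : ℂ) ≠ 0 := by exact_mod_cast (Real.sqrt_pos.2 hi).ne'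
    rw [mul_pow, Complex.I_sq, ← hsqrt]
    push_cast
    field_simp
  have hquad := tendsto_mul_comp_of_isLittleO_sub_mul_sq exp_taylor_two_isLittleO hsmall hsq
  have hlinear := (hb.mul_const u).ofReal.mul_const Complex.I
  have hlim := (hquad.add hlinear).cexp
  rw [ProbabilityMeasure.coe_mk, charFun_gaussianReal]
  convert! hlim.congr' ?_ using 3
  · push_cast
    ring
  · filter_upwards [ht.eventually_gt_atTop 0] with i hi
    exact (charFun_standardizedPoisson hi (b i) u).symm

lemma standardizedPoisson_real_Iic_zero {t : ℝ} (ht : 0 < t) (n : ℕ) :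
    (standardizedPoisson t n : Measure ℝ).real (Set.Iic 0) =
      ∑ m ∈ Finset.range (n + 1), poissonWeight t m := by
  have hpre : (fun k : ℕ ↦ ((k : ℝ) - n) / √t) ⁻¹' Set.Iic 0 = Finset.range (n + 1) := by
    ext k
    simp [div_le_iff₀ (Real.sqrt_pos.2 ht)]
  rw [standardizedPoisson, ProbabilityMeasure.coe_mk,
    map_measureReal_apply (by fun_prop) measurableSet_Iic, hpre, ← sum_measureReal_singleton]
  simp only [poissonMeasure_real_singleton, Real.coe_toNNReal t ht.le, poissonWeight]

lemma gaussianReal_real_Iic_zero (s : ℝ) :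
    (gaussianReal s 1).real (Set.Iic 0) =
      (√(2 * Real.pi))⁻¹ * ∫ u in Set.Ioi s, Real.exp (-u ^ 2 / 2) := by
  have hmap : gaussianReal s 1 = (gaussianReal 0 1).map fun u ↦ s - u := by
    rw [gaussianReal_map_const_sub, sub_zero]
  have hpre : (fun u ↦ s - u) ⁻¹' Set.Iic 0 = Set.Ici s := by
    ext u
    simp
  rw [hmap, map_measureReal_apply (by fun_prop) measurableSet_Iic, hpre, Measure.real,
    gaussianReal_apply_eq_integral _ one_ne_zero, ENNReal.toReal_ofReal (integral_nonneg
    fun u ↦ gaussianPDFReal_nonneg _ _ _), integral_Ici_eq_integral_Ioi]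
  simp [gaussianPDFReal_def, integral_const_mul]

lemma tendsto_sum_range_poissonWeight {n : ℕ → ℕ} (ht : Tendsto t atTop atTop)
    (hn : Tendsto (fun i ↦ (t i - n i) / √(t i)) atTop (𝓝 s)) :
    Tendsto (fun i ↦ ∑ m ∈ Finset.range (n i + 1), poissonWeight (t i) m) atTop
      (𝓝 ((√(2 * Real.pi))⁻¹ * ∫ u in Set.Ioi s, Real.exp (-u ^ 2 / 2))) := by
  have hfrontier : gaussianReal s 1 (frontier (Set.Iic 0)) = 0 := by
    have := nullSingletonClass_gaussianReal (μ := s) one_ne_zero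
    rw [frontier_Iic, measure_singleton]
  have hlim := (ENNReal.tendsto_toReal (measure_ne_top (gaussianReal s 1) _)).comp
    (ProbabilityMeasure.tendsto_measure_of_null_frontier_of_tendsto'
      (tendsto_standardizedPoisson ht hn) hfrontier)
  rw [← gaussianReal_real_Iic_zero]
  refine hlim.congr' ?_
  filter_upwards [ht.eventually_gt_atTop 0] with i hi
  exact standardizedPoisson_real_Iic_zero hi (n i)

end PoissonCLT

section KernelLimit

open Polynomial

variable {ι : Type*} {l : Filter ι} {t : ι → ℝ} {n : ι → ℕ} {s : ℝ}

lemma tendsto_sqrt_mul_poissonWeight_mul_scaledCharlier (ht : Tendsto t l atTop)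
    (hn : Tendsto (fun i ↦ (t i - n i) / √(t i)) l (𝓝 s)) (x y : ℕ) :
    Tendsto (fun i ↦ √(t i) * poissonWeight (t i) (n i) *
        (scaledCharlier (t i) (n i + 1) x * scaledCharlier (t i) (n i) y)) l
      (𝓝 ((√(2 * Real.pi))⁻¹ * Real.exp (-s ^ 2 / 2) *
        (aeval s (hermite x) * aeval s (hermite y)))) := by
  have hn_succ : Tendsto (fun i ↦ (t i - (n i + 1 : ℕ)) / √(t i)) l (𝓝 s) := by
    exact_mod_cast tendsto_sub_add_const_div_sqrt ht hn 1
  exact (tendsto_sqrt_mul_poissonWeight ht hn).mul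
    ((tendsto_scaledCharlier ht hn_succ x).mul (tendsto_scaledCharlier ht hn y))

lemma tendsto_charlierSum_succ_right (ht : Tendsto t l atTop)
    (hn : Tendsto (fun i ↦ (t i - n i) / √(t i)) l (𝓝 s)) {x y : ℕ}
    (hpred : Tendsto (fun i ↦ x * charlierSum (n i + 1) (t i) (x - 1) y) l
      (𝓝 (x * ((√(2 * Real.pi))⁻¹ * hermiteGaussianIntegral s (x - 1) y)))) :
    Tendsto (fun i ↦ charlierSum (n i + 1) (t i) x (y + 1)) l
      (𝓝 ((√(2 * Real.pi))⁻¹ * hermiteGaussianIntegral s x (y + 1))) := by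
  have hlim := (tendsto_sqrt_mul_poissonWeight_mul_scaledCharlier ht hn x y).add hpred
  convert! hlim.congr' ?_ using 2
  · rw [hermiteGaussianIntegral_succ_right]
    ring
  · filter_upwards [ht.eventually_gt_atTop 0] with i hi
    exact (charlierSum_succ_right hi (n i) x y).symm

lemma tendsto_charlierSum {t : ℕ → ℝ} {n : ℕ → ℕ} (ht : Tendsto t atTop atTop)
    (hn : Tendsto (fun i ↦ (t i - n i) / √(t i)) atTop (𝓝 s)) (x y : ℕ) :
    Tendsto (fun i ↦ charlierSum (n i + 1) (t i) x y) atTop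
      (𝓝 ((√(2 * Real.pi))⁻¹ * hermiteGaussianIntegral s x y)) := by
  have hzero_succ (y : ℕ) : Tendsto (fun i ↦ charlierSum (n i + 1) (t i) 0 (y + 1)) atTop
      (𝓝 ((√(2 * Real.pi))⁻¹ * hermiteGaussianIntegral s 0 (y + 1))) :=
    tendsto_charlierSum_succ_right ht hn (by simp)
  induction x generalizing y with
  | zero =>
    rcases y with _ | y
    · simpa [charlierSum, scaledCharlier_zero_right, hermiteGaussianIntegral] using
        tendsto_sum_range_poissonWeight ht hn
    · exact hzero_succ y
  | succ x ih =>
    rcases y with _ | y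
    · simpa only [charlierSum_comm, hermiteGaussianIntegral_comm] using hzero_succ x
    · exact tendsto_charlierSum_succ_right ht hn ((ih y).const_mul _)

end KernelLimit

/-- If `θ(N) > 0` and `(θ(N) − N)/√N → s`, then the Charlier kernel converges pointwise
to the discrete Hermite kernel:
`lim_{N→∞} Σ_{m=0}^{N−1} C̃_m(x;θ(N))·C̃_m(y;θ(N)) = K_s(x,y)` for all `x, y ∈ ℕ`. -/
theorem charlierKernel_tendsto_discreteHermiteKernel
    (s : ℝ) (θ : ℕ → ℝ) (hpos : ∀ N, 0 < θ N)
    (hlim : Tendsto (fun N : ℕ => (θ N - (N : ℝ)) / Real.sqrt (N : ℝ)) atTop (𝓝 s))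
    (x y : ℕ) :
    Tendsto (fun N : ℕ => charlierKernel N (θ N) x y) atTop
      (𝓝 (discreteHermiteKernel s x y)) := by
  have hθ : Tendsto θ atTop atTop :=
    tendsto_atTop_of_tendsto_sub_div_sqrt tendsto_natCast_atTop_atTop hlim
  have hscaled : Tendsto (fun N : ℕ ↦ (θ N - (N + (-1 : ℝ))) / √(θ N)) atTop (𝓝 s) :=
    tendsto_sub_add_const_div_sqrt hθ (tendsto_sub_div_sqrt_left tendsto_natCast_atTop_atTop hlim) _
  have hshift : Tendsto (fun N : ℕ ↦ (θ (N + 1) - N) / √(θ (N + 1))) atTop (𝓝 s) := by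
    simpa using (tendsto_add_atTop_iff_nat 1).2 hscaled
  rw [← tendsto_add_atTop_iff_nat 1, discreteHermiteKernel_eq_hermiteGaussianIntegral]
  simp only [charlierKernel_eq_charlierSum (hpos _).le]
  exact (tendsto_charlierSum ((tendsto_add_atTop_iff_nat 1).2 hθ) hshift x y).const_mul _

end
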